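/- Let D be a dagger category equipped with a conservative dagger functor F : D → Hilb, where Hilb is the dagger category of finite-dimensional complex Hilbert spaces with the adjoint of linear maps as dagger. Suppose that every positive endomorphism f : c → c in D is end-positive. Then D is minimal. -/

import Mathlib

/-!
STATEMENT 3: Let `D` be a dagger category equipped with a conservative dagger functor
`F : D → Hilb`, where `Hilb` is the dagger category of finite-dimensional complex Hilbert
spaces with the adjoint of linear maps as dagger.  Suppose that every positive endomorphism
`f : c → c` in `D` is end-positive.  Then `D` is minimal.
-/

open CategoryTheory

universe v u

/-- A dagger category: a contravariant involution which is the identity on objects. -/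
class DaggerCategory (D : Type u) [Category.{v} D] where
  dag : ∀ {x y : D}, (x ⟶ y) → (y ⟶ x)
  dag_dag : ∀ {x y : D} (f : x ⟶ y), dag (dag f) = f
  dag_id : ∀ (x : D), dag (𝟙 x) = 𝟙 x
  dag_comp : ∀ {x y z : D} (f : x ⟶ y) (g : y ⟶ z), dag (f ≫ g) = dag g ≫ dag f

namespace DaggerCategory

variable {D : Type u} [Category.{v} D] [DaggerCategory D]

/-- A morphism is unitary if it is invertible with inverse its dagger. -/
def IsUnitary {x y : D} (f : x ⟶ y) : Prop :=
  f ≫ dag f = 𝟙 x ∧ dag f ≫ f = 𝟙 y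

/-- `f = g† ∘ g` for some morphism `g : c ⟶ c'`. -/
def Positive {c : D} (f : c ⟶ c) : Prop :=
  ∃ (c' : D) (g : c ⟶ c'), f = g ≫ dag g

/-- `f = g† ∘ g` for some endomorphism `g : c ⟶ c`. -/
def EndPositive {c : D} (f : c ⟶ c) : Prop :=
  ∃ g : c ⟶ c, f = g ≫ dag g

/-- Unitary isomorphism relation on objects. -/
def UnitaryRel (x y : D) : Prop := ∃ f : x ⟶ y, IsUnitary f

/-- Isomorphism relation on objects. -/
def IsoRel (x y : D) : Prop := Nonempty (x ≅ y)

variable (D)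

/-- Unitary isomorphism classes of objects, `π₀ᵁ(D)`. -/
def pi0U := Quot (UnitaryRel (D := D))

/-- Isomorphism classes of objects, `π₀(D)`. -/
def pi0 := Quot (IsoRel (D := D))

/-- The canonical map `π₀ᵁ(D) → π₀(D)`. -/
def pi0UToPi0 : pi0U D → pi0 D :=
  Quot.map id (fun _ _ hf => hf.elim fun f hf => ⟨⟨f, dag f, hf.1, hf.2⟩⟩)

/-- A dagger category is minimal if the canonical map `π₀ᵁ(D) → π₀(D)` is a bijection. -/
def Minimal : Prop := Function.Bijective (pi0UToPi0 D)

end DaggerCategory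

open DaggerCategory

/-- The category of finite-dimensional complex Hilbert spaces. -/
structure Hilb : Type 1 where
  carrier : Type
  [nacg : NormedAddCommGroup carrier]
  [ips : InnerProductSpace ℂ carrier]
  [fd : FiniteDimensional ℂ carrier]

attribute [instance] Hilb.nacg Hilb.ips Hilb.fd

instance : Category Hilb where
  Hom X Y := X.carrier →ₗ[ℂ] Y.carrier
  id X := LinearMap.id
  comp f g := g.comp f
  id_comp f := LinearMap.comp_id f
  comp_id f := LinearMap.id_comp f
  assoc f g h := rfl

/-- The dagger structure on `Hilb` given by the adjoint of linear maps. -/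
noncomputable instance : DaggerCategory Hilb where
  dag {x y} f := LinearMap.adjoint (show x.carrier →ₗ[ℂ] y.carrier from f)
  dag_dag {x y} f := LinearMap.adjoint_adjoint (show x.carrier →ₗ[ℂ] y.carrier from f)
  dag_id x :=
    ((LinearMap.eq_adjoint_iff (LinearMap.id : x.carrier →ₗ[ℂ] x.carrier) LinearMap.id).mpr
      (fun _ _ => rfl)).symm
  dag_comp {x y z} f g :=
    LinearMap.adjoint_comp (show y.carrier →ₗ[ℂ] z.carrier from g)
      (show x.carrier →ₗ[ℂ] y.carrier from f)

/-!
If `e : x ≅ y` and `g` is an automorphism of `x` with `e† ∘ e = g† ∘ g`, then `e ∘ g⁻¹` is unitary.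
So it is enough to find such a `g` for every isomorphism `e`. End-positivity provides `g` only as an
endomorphism, with a left inverse because `g† ∘ g = e† ∘ e` is invertible; its image in `Hilb` is
then invertible, as one-sided inverses of endomorphisms of finite-dimensional spaces are two-sided,
and conservativity makes `g` itself invertible.
-/

theorem isDedekindFiniteMonoid_of_isLocalHom {M N : Type*} [Monoid M] [Monoid N] (φ : M →* N)
    [IsLocalHom φ] [IsDedekindFiniteMonoid N] : IsDedekindFiniteMonoid M where
  mul_eq_one_symm {a b} hab := by
    have ha : IsUnit (φ a) := .of_mul_eq_one (φ b) (by rw [← map_mul, hab, map_one])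
    exact (ha.of_map φ a).mul_left_cancel (by rw [← mul_assoc, hab, one_mul, mul_one])

theorem isLocalHom_mapEnd {C E : Type*} [Category C] [Category E] (F : C ⥤ E)
    [F.ReflectsIsomorphisms] (c : C) : IsLocalHom (F.mapEnd c) where
  map_nonunit g hg := by
    have : IsIso (F.map g) := (isUnit_iff_isIso (f := F.map g)).mp hg
    exact (isUnit_iff_isIso (f := g)).mpr (isIso_of_reflects_iso g F)

instance Hilb.isDedekindFiniteMonoid_end (H : Hilb) : IsDedekindFiniteMonoid (End H) :=
  inferInstanceAs (IsDedekindFiniteMonoid (Module.End ℂ H.carrier))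

namespace DaggerCategory

variable {D : Type u} [Category.{v} D] [DaggerCategory D]

/-- An endomorphism of the form `g† ∘ g` for some isomorphism `g : c ≅ c'`. -/
def IsoPositive {c : D} (f : c ⟶ c) : Prop :=
  ∃ (c' : D) (g : c ≅ c'), f = g.hom ≫ dag g.hom

/-- An endomorphism of the form `g† ∘ g` for some automorphism `g` of `c`. -/
def AutPositive {c : D} (f : c ⟶ c) : Prop :=
  ∃ g : c ≅ c, f = g.hom ≫ dag g.hom

theorem IsoPositive.positive {c : D} {f : c ⟶ c} : IsoPositive f → Positive f
  | ⟨c', g, hg⟩ => ⟨c', g.hom, hg⟩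

instance isIso_dag {x y : D} (f : x ⟶ y) [IsIso f] : IsIso (dag f) :=
  ⟨dag (inv f), by rw [← dag_comp, IsIso.inv_hom_id, dag_id],
    by rw [← dag_comp, IsIso.hom_inv_id, dag_id]⟩

theorem IsoPositive.isIso {c : D} {f : c ⟶ c} : IsoPositive f → IsIso f := by
  rintro ⟨_, g, rfl⟩
  infer_instance

theorem EndPositive.autPositive {c : D} [IsDedekindFiniteMonoid (End c)] {f : c ⟶ c} [IsIso f]
    (hf : EndPositive f) : AutPositive f := by
  obtain ⟨g, rfl⟩ := hf
  have g_comp_retraction : g ≫ dag g ≫ inv (g ≫ dag g) = 𝟙 c := by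
    rw [← Category.assoc, IsIso.hom_inv_id]
  have : IsIso g := (isUnit_iff_isIso (f := g)).mp (.of_mul_eq_one_right _ g_comp_retraction)
  exact ⟨asIso g, rfl⟩

theorem isUnitary_of_comp_dag_eq_id {x y : D} {f : x ⟶ y} [IsIso f] (hf : f ≫ dag f = 𝟙 x) :
    IsUnitary f :=
  ⟨hf, by rw [← IsIso.inv_eq_of_hom_inv_id hf, IsIso.inv_hom_id]⟩

theorem unitaryRel_of_autPositive {x y : D} (e : x ≅ y) (he : AutPositive (e.hom ≫ dag e.hom)) :
    UnitaryRel x y := by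
  obtain ⟨g, hg⟩ := he
  refine ⟨g.inv ≫ e.hom, isUnitary_of_comp_dag_eq_id ?_⟩
  calc (g.inv ≫ e.hom) ≫ dag (g.inv ≫ e.hom)
      = g.inv ≫ (e.hom ≫ dag e.hom) ≫ dag g.inv := by simp only [dag_comp, Category.assoc]
    _ = g.inv ≫ (g.hom ≫ dag g.hom) ≫ dag g.inv := by rw [hg]
    _ = dag g.hom ≫ dag g.inv := by rw [Category.assoc, g.inv_hom_id_assoc]
    _ = 𝟙 x := by rw [← dag_comp, g.inv_hom_id, dag_id]

theorem minimal_of_isoRel_imp_unitaryRel (h : ∀ x y : D, IsoRel x y → UnitaryRel x y) :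
    Minimal D := by
  refine ⟨?_, Function.Surjective.of_comp (g := Quot.mk _) Quot.mk_surjective⟩
  rintro ⟨x⟩ ⟨y⟩ hxy
  exact Quot.sound (h x y (((isIsomorphicSetoid D).iseqv.quot_mk_eq_iff x y).mp hxy))

theorem minimal_of_isoPositive_imp_autPositive
    (h : ∀ (c : D) (f : c ⟶ c), IsoPositive f → AutPositive f) : Minimal D :=
  minimal_of_isoRel_imp_unitaryRel fun x y ⟨e⟩ =>
    unitaryRel_of_autPositive e (h x _ ⟨y, e, rfl⟩)

end DaggerCategory

theorem minimal_of_conservative_dagger_functor_to_Hilb_general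
    {D : Type u} [Category.{v} D] [DaggerCategory D] {C : Type*} [Category C]
    (F : D ⥤ C) [F.ReflectsIsomorphisms] [∀ c : D, IsDedekindFiniteMonoid (End (F.obj c))]
    (hpos : ∀ (c : D) (f : c ⟶ c), IsoPositive f → EndPositive f) :
    Minimal D := by
  refine minimal_of_isoPositive_imp_autPositive fun c f hf => ?_
  have : IsLocalHom (F.mapEnd c) := isLocalHom_mapEnd F c
  have : IsDedekindFiniteMonoid (End c) := isDedekindFiniteMonoid_of_isLocalHom (F.mapEnd c)
  have : IsIso f := hf.isIso
  exact (hpos c f hf).autPositive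

/-- If a dagger category admits a conservative dagger functor to `Hilb` and every positive
endomorphism is end-positive, then it is minimal. -/
theorem minimal_of_conservative_dagger_functor_to_Hilb
    (D : Type u) [Category.{v} D] [DaggerCategory D]
    (F : D ⥤ Hilb)
    (hdagger : ∀ {x y : D} (f : x ⟶ y), F.map (dag f) = dag (F.map f))
    (hconservative : ∀ {x y : D} (f : x ⟶ y), IsIso (F.map f) → IsIso f)
    (hpos : ∀ (c : D) (f : c ⟶ c), Positive f → EndPositive f) :
    Minimal D := by
  have : F.ReflectsIsomorphisms := ⟨fun f hf => hconservative f hf⟩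
  exact minimal_of_conservative_dagger_functor_to_Hilb_general F fun c f hf => hpos c f hf.positive
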